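/- Let Φ be a proof in LKp of some sequent, with degree δ(Φ) = d > 0. Then there exists a proof Ψ in LKp of the same sequent with δ(Ψ) < d. -/

import Mathlib

/-!
The argument is semantic. Every rule of LKp preserves validity under Boolean valuations, so the
end sequent of a proof is valid (`valid_of_isProof`). Conversely, every valid sequent has a
cut-free proof (`cutFreeProvable_of_valid`), which has degree `0`, hence degree smaller than any
positive `d`.

Cut-free completeness goes by induction on the number of connectives in the sequent. A compound
formula on either side is the principal formula of a logical rule (with contractions for `∧` on
the left and `∨` on the right) whose premises are again valid and have fewer connectives. In a
valid sequent consisting of atoms only, the valuation making exactly the antecedent true shows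
that some atom occurs on both sides, so the sequent is a weakening of an axiom.
-/

/-!
The system LKp: the propositional fragment of Gentzen's sequent calculus LK.
Sequents are pairs of finite lists of formulas.  In the rules below, a list
written `Γ, P` in the paper is encoded as `Γ ++ [P]` on the left of the
turnstile and as `P :: Δ` on the right (matching the usual presentation
`Γ ⊢ P, Δ`).
-/

namespace LKp

/-- Classical propositional formulas over countably many atoms. -/
inductive Formula : Type where
  | atom : ℕ → Formula
  | neg  : Formula → Formula
  | and  : Formula → Formula → Formula
  | or   : Formula → Formula → Formula
  | imp  : Formula → Formula → Formula
deriving DecidableEq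

/-- A sequent `Γ ⊢ Δ` is a pair of finite lists of formulas. -/
abbrev Sequent := List Formula × List Formula

/-- The degree of a formula: `δ(a) = 1`, `δ(¬P) = 1 + δ(P)`,
`δ(P∧Q) = δ(P∨Q) = δ(P→Q) = 1 + max(δ(P), δ(Q))`. -/
def Formula.degree : Formula → ℕ
  | .atom _ => 1
  | .neg P => P.degree + 1
  | .and P Q => max P.degree Q.degree + 1
  | .or P Q => max P.degree Q.degree + 1
  | .imp P Q => max P.degree Q.degree + 1

/-- Derivations in LKp: trees of rule instances, with `hyp` marking an open
leaf (a premise of the derivation). -/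
inductive Deriv : Sequent → Type where
  | hyp (S : Sequent) : Deriv S
  | ax (P : Formula) : Deriv ([P], [P])
  | permL (Γ Γ' Δ : List Formula) (P Q : Formula) :
      Deriv (Γ ++ P :: Q :: Γ', Δ) → Deriv (Γ ++ Q :: P :: Γ', Δ)
  | permR (Γ Δ Δ' : List Formula) (P Q : Formula) :
      Deriv (Γ, Δ ++ P :: Q :: Δ') → Deriv (Γ, Δ ++ Q :: P :: Δ')
  | contL (Γ Δ : List Formula) (P : Formula) :
      Deriv (Γ ++ [P, P], Δ) → Deriv (Γ ++ [P], Δ)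
  | contR (Γ Δ : List Formula) (Q : Formula) :
      Deriv (Γ, Q :: Q :: Δ) → Deriv (Γ, Q :: Δ)
  | weakL (Γ Δ : List Formula) (P : Formula) :
      Deriv (Γ, Δ) → Deriv (Γ ++ [P], Δ)
  | weakR (Γ Δ : List Formula) (Q : Formula) :
      Deriv (Γ, Δ) → Deriv (Γ, Q :: Δ)
  | cut (Γ Δ Γ' Δ' : List Formula) (P : Formula) :
      Deriv (Γ, P :: Δ) → Deriv (Γ' ++ [P], Δ') → Deriv (Γ ++ Γ', Δ ++ Δ')
  | andL1 (Γ Δ : List Formula) (P Q : Formula) :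
      Deriv (Γ ++ [P], Δ) → Deriv (Γ ++ [P.and Q], Δ)
  | andL2 (Γ Δ : List Formula) (P Q : Formula) :
      Deriv (Γ ++ [Q], Δ) → Deriv (Γ ++ [P.and Q], Δ)
  | andR (Γ Δ : List Formula) (P Q : Formula) :
      Deriv (Γ, P :: Δ) → Deriv (Γ, Q :: Δ) → Deriv (Γ, (P.and Q) :: Δ)
  | orR1 (Γ Δ : List Formula) (P Q : Formula) :
      Deriv (Γ, P :: Δ) → Deriv (Γ, (P.or Q) :: Δ)
  | orR2 (Γ Δ : List Formula) (P Q : Formula) :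
      Deriv (Γ, Q :: Δ) → Deriv (Γ, (P.or Q) :: Δ)
  | orL (Γ Δ : List Formula) (P Q : Formula) :
      Deriv (Γ ++ [P], Δ) → Deriv (Γ ++ [Q], Δ) → Deriv (Γ ++ [P.or Q], Δ)
  | impR (Γ Δ : List Formula) (P Q : Formula) :
      Deriv (Γ ++ [P], Q :: Δ) → Deriv (Γ, (P.imp Q) :: Δ)
  | impL (Γ Δ : List Formula) (P Q : Formula) :
      Deriv (Γ, P :: Δ) → Deriv (Γ ++ [Q], Δ) → Deriv (Γ ++ [P.imp Q], Δ)
  | negL (Γ Δ : List Formula) (P : Formula) :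
      Deriv (Γ, P :: Δ) → Deriv (Γ ++ [P.neg], Δ)
  | negR (Γ Δ : List Formula) (P : Formula) :
      Deriv (Γ ++ [P], Δ) → Deriv (Γ, P.neg :: Δ)

/-- The degree of a derivation: the maximum of the degrees of the cut
formulas occurring in it (`0` if there is no cut). -/
def Deriv.degree : ∀ {S : Sequent}, Deriv S → ℕ
  | _, .hyp _ => 0
  | _, .ax _ => 0
  | _, .permL _ _ _ _ _ d => Deriv.degree d
  | _, .permR _ _ _ _ _ d => Deriv.degree d
  | _, .contL _ _ _ d => Deriv.degree d
  | _, .contR _ _ _ d => Deriv.degree d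
  | _, .weakL _ _ _ d => Deriv.degree d
  | _, .weakR _ _ _ d => Deriv.degree d
  | _, .cut _ _ _ _ P d₁ d₂ => max P.degree (max (Deriv.degree d₁) (Deriv.degree d₂))
  | _, .andL1 _ _ _ _ d => Deriv.degree d
  | _, .andL2 _ _ _ _ d => Deriv.degree d
  | _, .andR _ _ _ _ d₁ d₂ => max (Deriv.degree d₁) (Deriv.degree d₂)
  | _, .orR1 _ _ _ _ d => Deriv.degree d
  | _, .orR2 _ _ _ _ d => Deriv.degree d
  | _, .orL _ _ _ _ d₁ d₂ => max (Deriv.degree d₁) (Deriv.degree d₂)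
  | _, .impR _ _ _ _ d => Deriv.degree d
  | _, .impL _ _ _ _ d₁ d₂ => max (Deriv.degree d₁) (Deriv.degree d₂)
  | _, .negL _ _ _ d => Deriv.degree d
  | _, .negR _ _ _ d => Deriv.degree d

/-- A derivation is a proof when all of its leaves are axiom instances,
i.e. it has no open hypothesis. -/
def Deriv.isProof : ∀ {S : Sequent}, Deriv S → Prop
  | _, .hyp _ => False
  | _, .ax _ => True
  | _, .permL _ _ _ _ _ d => Deriv.isProof d
  | _, .permR _ _ _ _ _ d => Deriv.isProof d
  | _, .contL _ _ _ d => Deriv.isProof d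
  | _, .contR _ _ _ d => Deriv.isProof d
  | _, .weakL _ _ _ d => Deriv.isProof d
  | _, .weakR _ _ _ d => Deriv.isProof d
  | _, .cut _ _ _ _ _ d₁ d₂ => Deriv.isProof d₁ ∧ Deriv.isProof d₂
  | _, .andL1 _ _ _ _ d => Deriv.isProof d
  | _, .andL2 _ _ _ _ d => Deriv.isProof d
  | _, .andR _ _ _ _ d₁ d₂ => Deriv.isProof d₁ ∧ Deriv.isProof d₂
  | _, .orR1 _ _ _ _ d => Deriv.isProof d
  | _, .orR2 _ _ _ _ d => Deriv.isProof d
  | _, .orL _ _ _ _ d₁ d₂ => Deriv.isProof d₁ ∧ Deriv.isProof d₂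
  | _, .impR _ _ _ _ d => Deriv.isProof d
  | _, .impL _ _ _ _ d₁ d₂ => Deriv.isProof d₁ ∧ Deriv.isProof d₂
  | _, .negL _ _ _ d => Deriv.isProof d
  | _, .negR _ _ _ d => Deriv.isProof d

/-- The list of open premises (hypothesis leaves) of a derivation. -/
def Deriv.prems : ∀ {S : Sequent}, Deriv S → List Sequent
  | _, .hyp S => [S]
  | _, .ax _ => []
  | _, .permL _ _ _ _ _ d => Deriv.prems d
  | _, .permR _ _ _ _ _ d => Deriv.prems d
  | _, .contL _ _ _ d => Deriv.prems d
  | _, .contR _ _ _ d => Deriv.prems d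
  | _, .weakL _ _ _ d => Deriv.prems d
  | _, .weakR _ _ _ d => Deriv.prems d
  | _, .cut _ _ _ _ _ d₁ d₂ => Deriv.prems d₁ ++ Deriv.prems d₂
  | _, .andL1 _ _ _ _ d => Deriv.prems d
  | _, .andL2 _ _ _ _ d => Deriv.prems d
  | _, .andR _ _ _ _ d₁ d₂ => Deriv.prems d₁ ++ Deriv.prems d₂
  | _, .orR1 _ _ _ _ d => Deriv.prems d
  | _, .orR2 _ _ _ _ d => Deriv.prems d
  | _, .orL _ _ _ _ d₁ d₂ => Deriv.prems d₁ ++ Deriv.prems d₂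
  | _, .impR _ _ _ _ d => Deriv.prems d
  | _, .impL _ _ _ _ d₁ d₂ => Deriv.prems d₁ ++ Deriv.prems d₂
  | _, .negL _ _ _ d => Deriv.prems d
  | _, .negR _ _ _ d => Deriv.prems d

/-- A derivation is cut-free when it contains no instance of the cut rule. -/
def Deriv.cutFree : ∀ {S : Sequent}, Deriv S → Prop
  | _, .hyp _ => True
  | _, .ax _ => True
  | _, .permL _ _ _ _ _ d => Deriv.cutFree d
  | _, .permR _ _ _ _ _ d => Deriv.cutFree d
  | _, .contL _ _ _ d => Deriv.cutFree d
  | _, .contR _ _ _ d => Deriv.cutFree d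
  | _, .weakL _ _ _ d => Deriv.cutFree d
  | _, .weakR _ _ _ d => Deriv.cutFree d
  | _, .cut _ _ _ _ _ _ _ => False
  | _, .andL1 _ _ _ _ d => Deriv.cutFree d
  | _, .andL2 _ _ _ _ d => Deriv.cutFree d
  | _, .andR _ _ _ _ d₁ d₂ => Deriv.cutFree d₁ ∧ Deriv.cutFree d₂
  | _, .orR1 _ _ _ _ d => Deriv.cutFree d
  | _, .orR2 _ _ _ _ d => Deriv.cutFree d
  | _, .orL _ _ _ _ d₁ d₂ => Deriv.cutFree d₁ ∧ Deriv.cutFree d₂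
  | _, .impR _ _ _ _ d => Deriv.cutFree d
  | _, .impL _ _ _ _ d₁ d₂ => Deriv.cutFree d₁ ∧ Deriv.cutFree d₂
  | _, .negL _ _ _ d => Deriv.cutFree d
  | _, .negR _ _ _ d => Deriv.cutFree d

end LKp

namespace LKp

/-! ### Semantics and soundness -/

/-- Truth of a formula under a valuation of the atoms. -/
def Formula.eval (v : ℕ → Prop) : Formula → Prop
  | .atom a => v a
  | .neg P => ¬ P.eval v
  | .and P Q => P.eval v ∧ Q.eval v
  | .or P Q => P.eval v ∨ Q.eval v
  | .imp P Q => P.eval v → Q.eval v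

/-- A valuation satisfies `Γ ⊢ Δ` when, if all of `Γ` is true, some formula of `Δ` is true. -/
def Satisfies (v : ℕ → Prop) (S : Sequent) : Prop :=
  (∀ P ∈ S.1, P.eval v) → ∃ Q ∈ S.2, Q.eval v

/-- A sequent is valid when every valuation satisfies it. -/
def Valid (S : Sequent) : Prop := ∀ v, Satisfies v S

@[simp] theorem satisfies_cons {v : ℕ → Prop} {Γ Δ : List Formula} {P : Formula} :
    Satisfies v (Γ, P :: Δ) ↔ (¬ P.eval v → Satisfies v (Γ, Δ)) := by
  simp only [Satisfies, List.exists_mem_cons_iff]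
  tauto

@[simp] theorem satisfies_snoc {v : ℕ → Prop} {Γ Δ : List Formula} {P : Formula} :
    Satisfies v (Γ ++ [P], Δ) ↔ (P.eval v → Satisfies v (Γ, Δ)) := by
  simp only [Satisfies, List.forall_mem_append, List.forall_mem_singleton]
  tauto

@[simp] theorem satisfies_snoc₂ {v : ℕ → Prop} {Γ Δ : List Formula} {P Q : Formula} :
    Satisfies v (Γ ++ [P, Q], Δ) ↔ (P.eval v → Q.eval v → Satisfies v (Γ, Δ)) := by
  rw [← List.singleton_append, ← List.append_assoc, satisfies_snoc, satisfies_snoc]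
  tauto

theorem valid_of_isProof {S : Sequent} (Φ : Deriv S) (h : Φ.isProof) : Valid S := by
  intro v
  induction Φ with
  | hyp S => exact h.elim
  | _ =>
    simp only [Deriv.isProof, Satisfies, List.mem_append, List.mem_cons,
      List.not_mem_nil, or_false, or_imp, forall_and, forall_eq, or_and_right, exists_or,
      exists_eq_left, Formula.eval] at *
    grind

/-! ### Admissible rules of the cut-free calculus -/

/-- The sequent has a proof of degree `0`. Formulas have positive degree, so such a proof
contains no cut. -/
def CutFreeProvable (S : Sequent) : Prop :=
  ∃ Ψ : Deriv S, Ψ.isProof ∧ Ψ.degree = 0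

namespace CutFreeProvable

variable {Γ Γ' Δ Δ' : List Formula} {P Q : Formula}

/-- The induction on the permutation generalizes over an initial segment, since the exchange rule
acts at an arbitrary position. -/
theorem permL (h : Γ.Perm Γ') : CutFreeProvable (Γ, Δ) → CutFreeProvable (Γ', Δ) := by
  suffices H : ∀ Γ₀, CutFreeProvable (Γ₀ ++ Γ, Δ) → CutFreeProvable (Γ₀ ++ Γ', Δ) from H []
  induction h with
  | nil => exact fun _ => id
  | cons P _ ih => intro Γ₀ hp; simpa using ih (Γ₀ ++ [P]) (by simpa using hp)
  | swap P Q l => rintro Γ₀ ⟨d, hd⟩; exact ⟨.permL Γ₀ l Δ Q P d, hd⟩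
  | trans _ _ ih₁ ih₂ => exact fun Γ₀ hp => ih₂ Γ₀ (ih₁ Γ₀ hp)

theorem permR (h : Δ.Perm Δ') : CutFreeProvable (Γ, Δ) → CutFreeProvable (Γ, Δ') := by
  suffices H : ∀ Δ₀, CutFreeProvable (Γ, Δ₀ ++ Δ) → CutFreeProvable (Γ, Δ₀ ++ Δ') from H []
  induction h with
  | nil => exact fun _ => id
  | cons P _ ih => intro Δ₀ hp; simpa using ih (Δ₀ ++ [P]) (by simpa using hp)
  | swap P Q l => rintro Δ₀ ⟨d, hd⟩; exact ⟨.permR Γ Δ₀ l Q P d, hd⟩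
  | trans _ _ ih₁ ih₂ => exact fun Δ₀ hp => ih₂ Δ₀ (ih₁ Δ₀ hp)

theorem of_mem_of_mem (hΓ : P ∈ Γ) (hΔ : P ∈ Δ) : CutFreeProvable (Γ, Δ) := by
  have hL : ∀ l, CutFreeProvable (P :: l, [P]) := by
    intro l
    induction l with
    | nil => exact ⟨.ax P, trivial, rfl⟩
    | cons Q l ih =>
      obtain ⟨d, hd⟩ := ih
      exact permL ((List.perm_append_singleton Q (P :: l)).trans (.swap P Q l))
        ⟨.weakL _ _ Q d, hd⟩
  have hR : ∀ l l', CutFreeProvable (P :: l, P :: l') := by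
    intro l l'
    induction l' with
    | nil => exact hL l
    | cons Q l' ih =>
      obtain ⟨d, hd⟩ := ih
      exact permR (.swap P Q l') ⟨.weakR _ _ Q d, hd⟩
  exact permL (List.perm_cons_erase hΓ).symm (permR (List.perm_cons_erase hΔ).symm (hR _ _))

theorem negL (h : CutFreeProvable (Γ, P :: Δ)) : CutFreeProvable (Γ ++ [P.neg], Δ) := by
  obtain ⟨d, hd⟩ := h
  exact ⟨.negL _ _ _ d, hd⟩

theorem negR (h : CutFreeProvable (Γ ++ [P], Δ)) : CutFreeProvable (Γ, P.neg :: Δ) := by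
  obtain ⟨d, hd⟩ := h
  exact ⟨.negR _ _ _ d, hd⟩

/-- The invertible form of left `∧`: both conjuncts are kept in the premise, at the price of a
contraction on `P ∧ Q`. -/
theorem andL (h : CutFreeProvable (Γ ++ [P, Q], Δ)) : CutFreeProvable (Γ ++ [P.and Q], Δ) := by
  obtain ⟨d, hd⟩ : CutFreeProvable ((Γ ++ [P]) ++ [Q], Δ) := by simpa using h
  obtain ⟨d', hd'⟩ : CutFreeProvable ((Γ ++ [P.and Q]) ++ [P], Δ) :=
    permL (by simpa using (List.Perm.swap _ _ []).append_left Γ) ⟨.andL2 _ _ P Q d, hd⟩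
  obtain ⟨e, he⟩ : CutFreeProvable (Γ ++ [P.and Q, P.and Q], Δ) := by
    have : CutFreeProvable ((Γ ++ [P.and Q]) ++ [P.and Q], Δ) := ⟨.andL1 _ _ P Q d', hd'⟩
    simpa using this
  exact ⟨.contL _ _ _ e, he⟩

theorem andR (h₁ : CutFreeProvable (Γ, P :: Δ)) (h₂ : CutFreeProvable (Γ, Q :: Δ)) :
    CutFreeProvable (Γ, P.and Q :: Δ) := by
  obtain ⟨d₁, hp₁, hd₁⟩ := h₁
  obtain ⟨d₂, hp₂, hd₂⟩ := h₂
  exact ⟨.andR _ _ _ _ d₁ d₂, ⟨hp₁, hp₂⟩, by simp [Deriv.degree, hd₁, hd₂]⟩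

theorem orL (h₁ : CutFreeProvable (Γ ++ [P], Δ)) (h₂ : CutFreeProvable (Γ ++ [Q], Δ)) :
    CutFreeProvable (Γ ++ [P.or Q], Δ) := by
  obtain ⟨d₁, hp₁, hd₁⟩ := h₁
  obtain ⟨d₂, hp₂, hd₂⟩ := h₂
  exact ⟨.orL _ _ _ _ d₁ d₂, ⟨hp₁, hp₂⟩, by simp [Deriv.degree, hd₁, hd₂]⟩

/-- The invertible form of right `∨`, dual to `andL`. -/
theorem orR (h : CutFreeProvable (Γ, P :: Q :: Δ)) : CutFreeProvable (Γ, P.or Q :: Δ) := by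
  obtain ⟨d, hd⟩ := h
  obtain ⟨e, he⟩ : CutFreeProvable (Γ, Q :: P.or Q :: Δ) :=
    permR (.swap _ _ _) ⟨.orR1 _ _ P Q d, hd⟩
  exact ⟨.contR _ _ _ (.orR2 _ _ P Q e), he⟩

theorem impL (h₁ : CutFreeProvable (Γ, P :: Δ)) (h₂ : CutFreeProvable (Γ ++ [Q], Δ)) :
    CutFreeProvable (Γ ++ [P.imp Q], Δ) := by
  obtain ⟨d₁, hp₁, hd₁⟩ := h₁
  obtain ⟨d₂, hp₂, hd₂⟩ := h₂
  exact ⟨.impL _ _ _ _ d₁ d₂, ⟨hp₁, hp₂⟩, by simp [Deriv.degree, hd₁, hd₂]⟩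

theorem impR (h : CutFreeProvable (Γ ++ [P], Q :: Δ)) : CutFreeProvable (Γ, P.imp Q :: Δ) := by
  obtain ⟨d, hd⟩ := h
  exact ⟨.impR _ _ _ _ d, hd⟩

end CutFreeProvable

/-! ### Cut-free completeness -/

/-- The number of connectives in a formula. -/
def Formula.connectives : Formula → ℕ
  | .atom _ => 0
  | .neg P => P.connectives + 1
  | .and P Q => P.connectives + Q.connectives + 1
  | .or P Q => P.connectives + Q.connectives + 1
  | .imp P Q => P.connectives + Q.connectives + 1

/-- The total number of connectives in a list of formulas. -/
def connectivesSum (Γ : List Formula) : ℕ := (Γ.map Formula.connectives).sum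

theorem connectivesSum_perm {Γ Γ' : List Formula} (h : Γ.Perm Γ') :
    connectivesSum Γ = connectivesSum Γ' := (h.map _).sum_eq

@[simp] theorem connectivesSum_cons (P : Formula) (Γ : List Formula) :
    connectivesSum (P :: Γ) = P.connectives + connectivesSum Γ := by simp [connectivesSum]

@[simp] theorem connectivesSum_nil : connectivesSum [] = 0 := rfl

@[simp] theorem connectivesSum_append (Γ Γ' : List Formula) :
    connectivesSum (Γ ++ Γ') = connectivesSum Γ + connectivesSum Γ' := by simp [connectivesSum]

theorem Valid.perm {Γ Γ' Δ Δ' : List Formula} (hΓ : Γ.Perm Γ') (hΔ : Δ.Perm Δ')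
    (h : Valid (Γ, Δ)) : Valid (Γ', Δ') := by
  intro v hv
  obtain ⟨Q, hQ, hQv⟩ := h v fun P hP => hv P (hΓ.mem_iff.1 hP)
  exact ⟨Q, hΔ.mem_iff.1 hQ, hQv⟩

/-- A valid sequent of atoms is a weakening of an axiom: the valuation true exactly on the atoms
of `Γ` must satisfy some member of `Δ`. -/
theorem cutFreeProvable_of_valid_atoms {Γ Δ : List Formula}
    (hΓ : ∀ P ∈ Γ, ∃ a, P = .atom a) (hΔ : ∀ P ∈ Δ, ∃ a, P = .atom a)
    (h : Valid (Γ, Δ)) : CutFreeProvable (Γ, Δ) := by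
  obtain ⟨Q, hQ, hQv⟩ := h (fun a => .atom a ∈ Γ) (by
    intro P hP
    obtain ⟨a, rfl⟩ := hΓ P hP
    exact hP)
  obtain ⟨a, rfl⟩ := hΔ Q hQ
  exact .of_mem_of_mem hQv hQ

theorem cutFreeProvable_of_valid (n : ℕ) : ∀ Γ Δ : List Formula,
    connectivesSum Γ + connectivesSum Δ = n → Valid (Γ, Δ) → CutFreeProvable (Γ, Δ) := by
  induction n using Nat.strong_induction_on with
  | _ n ih =>
    intro Γ Δ hn hv
    by_cases hΓ : ∀ P ∈ Γ, ∃ a, P = .atom a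
    · by_cases hΔ : ∀ P ∈ Δ, ∃ a, P = .atom a
      · exact cutFreeProvable_of_valid_atoms hΓ hΔ hv
      · push Not at hΔ
        obtain ⟨F, hF, hatom⟩ := hΔ
        have hperm := List.perm_cons_erase hF
        generalize Δ.erase F = Δ' at hperm
        rw [connectivesSum_perm hperm] at hn
        replace hv := hv.perm (.refl _) hperm
        refine .permR hperm.symm ?_
        clear hperm hF hΓ
        cases F with
        | atom a => exact absurd rfl (hatom a)
        | neg P =>
          refine .negR (ih _ ?_ _ _ rfl ?_)
          · simp [Formula.connectives] at *; omega
          · exact fun v => by have := hv v; simp [Formula.eval] at *; tauto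
        | and P Q =>
          refine .andR (ih _ ?_ _ _ rfl ?_) (ih _ ?_ _ _ rfl ?_)
          · simp [Formula.connectives] at *; omega
          · exact fun v => by have := hv v; simp [Formula.eval] at *; tauto
          · simp [Formula.connectives] at *; omega
          · exact fun v => by have := hv v; simp [Formula.eval] at *; tauto
        | or P Q =>
          refine .orR (ih _ ?_ _ _ rfl ?_)
          · simp [Formula.connectives] at *; omega
          · exact fun v => by have := hv v; simp [Formula.eval] at *; tauto
        | imp P Q =>
          refine .impR (ih _ ?_ _ _ rfl ?_)
          · simp [Formula.connectives] at *; omega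
          · exact fun v => by have := hv v; simp [Formula.eval] at *; tauto
    · push Not at hΓ
      obtain ⟨F, hF, hatom⟩ := hΓ
      have hperm := (List.perm_cons_erase hF).trans (List.perm_append_singleton F _).symm
      generalize Γ.erase F = Γ' at hperm
      rw [connectivesSum_perm hperm] at hn
      replace hv := hv.perm hperm (.refl _)
      refine .permL hperm.symm ?_
      clear hperm hF
      cases F with
      | atom a => exact absurd rfl (hatom a)
      | neg P =>
        refine .negL (ih _ ?_ _ _ rfl ?_)
        · simp [Formula.connectives] at *; omega
        · exact fun v => by have := hv v; simp [Formula.eval] at *; tauto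
      | and P Q =>
        refine .andL (ih _ ?_ _ _ rfl ?_)
        · simp [Formula.connectives] at *; omega
        · exact fun v => by have := hv v; simp [Formula.eval] at *; tauto
      | or P Q =>
        refine .orL (ih _ ?_ _ _ rfl ?_) (ih _ ?_ _ _ rfl ?_)
        · simp [Formula.connectives] at *; omega
        · exact fun v => by have := hv v; simp [Formula.eval] at *; tauto
        · simp [Formula.connectives] at *; omega
        · exact fun v => by have := hv v; simp [Formula.eval] at *; tauto
      | imp P Q =>
        refine .impL (ih _ ?_ _ _ rfl ?_) (ih _ ?_ _ _ rfl ?_)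
        · simp [Formula.connectives] at *; omega
        · exact fun v => by have := hv v; simp [Formula.eval] at *; tauto
        · simp [Formula.connectives] at *; omega
        · exact fun v => by have := hv v; simp [Formula.eval] at *; tauto

/-- Lemma 3 of the cut-elimination argument.
Every proof in LKp of degree `d > 0` can be transformed into a proof of the
same sequent having strictly smaller degree. -/
theorem degree_lowering (S : Sequent) (Φ : Deriv S)
    (hΦ : Φ.isProof) (hd : 0 < Φ.degree) :
    ∃ Ψ : Deriv S, Ψ.isProof ∧ Ψ.degree < Φ.degree := by
  obtain ⟨Ψ, hΨ, hΨd⟩ := cutFreeProvable_of_valid _ S.1 S.2 rfl (valid_of_isProof Φ hΦ)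
  exact ⟨Ψ, hΨ, hΨd ▸ hd⟩

end LKp
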